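/- Let (X,P) be a poset on a nonempty finite set X. Then dim(X,P) ≤ 2 if and only if there exists a partial order Q on X such that P and Q are conjugate partial orders. -/

import Mathlib

/-- `P` is a partial order (reflexive, antisymmetric, transitive) on `X`. -/
def IsPartialOrderRel {X : Type*} (P : X → X → Prop) : Prop :=
  (∀ x, P x x) ∧ (∀ x y, P x y → P y x → x = y) ∧ (∀ x y z, P x y → P y z → P x z)

/-- `L` is a linear order (complete, antisymmetric, transitive) on `X`. -/
def IsLinearOrderRel {X : Type*} (L : X → X → Prop) : Prop :=
  (∀ x y, L x y ∨ L y x) ∧ (∀ x y, L x y → L y x → x = y) ∧ (∀ x y z, L x y → L y z → L x z)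

/-- The dual relation: `x P^d y ↔ y P x`. -/
def dualRel {X : Type*} (P : X → X → Prop) : X → X → Prop := fun x y => P y x

/-- Union of two binary relations. -/
def relUnion {X : Type*} (P Q : X → X → Prop) : X → X → Prop := fun x y => P x y ∨ Q x y

/-- `x` and `y` are comparable in `P`. -/
def Compar {X : Type*} (P : X → X → Prop) (x y : X) : Prop := P x y ∨ P y x

/-- `P` and `Q` are conjugate: every pair of distinct elements is comparable
in exactly one of them. -/
def ConjugateRel {X : Type*} (P Q : X → X → Prop) : Prop :=
  ∀ x y : X, x ≠ y → Xor' (Compar P x y) (Compar Q x y)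

/-- `Q` is a partial-conjugate of `P`:
(i) every pair of distinct elements is comparable in at most one of `P`, `Q`;
(ii) `P ∪ Q` is a partial order;
(iii) the transitive closure of `P ∪ Q^d` is a partial order. -/
def IsPartialConjugate {X : Type*} (P Q : X → X → Prop) : Prop :=
  (∀ x y : X, x ≠ y → ¬(Compar P x y ∧ Compar Q x y)) ∧
  IsPartialOrderRel (relUnion P Q) ∧
  IsPartialOrderRel (Relation.TransGen (relUnion P (dualRel Q)))

/-- The union `P₁ ∪ ⋯ ∪ P_k` (indices from 1 to `k`). -/
def unionUpTo {X : Type*} (Ps : ℕ → X → X → Prop) (k : ℕ) : X → X → Prop :=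
  fun x y => ∃ i, 1 ≤ i ∧ i ≤ k ∧ Ps i x y

/-- `Ps 1, …, Ps n` is a sequence of recursive partial-conjugates. -/
def RecPartialConjSeq {X : Type*} (n : ℕ) (Ps : ℕ → X → X → Prop) : Prop :=
  (∀ i, 1 ≤ i → i ≤ n → IsPartialOrderRel (Ps i)) ∧
  (∀ k, 2 ≤ k → k ≤ n - 1 → IsPartialConjugate (unionUpTo Ps (k - 1)) (Ps k)) ∧
  ConjugateRel (unionUpTo Ps (n - 1)) (Ps n)

/-- `P` is the intersection of `n` linear orders on `X`. -/
def RealizedBy {X : Type*} (n : ℕ) (P : X → X → Prop) : Prop :=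
  ∃ L : Fin n → X → X → Prop, (∀ i, IsLinearOrderRel (L i)) ∧
    ∀ x y, P x y ↔ ∀ i, L i x y

/-- The dimension of the poset `(X, P)`: the smallest `n` such that `P` is the
intersection of `n` linear orders. -/
noncomputable def posetDim {X : Type*} (P : X → X → Prop) : ℕ :=
  sInf {n | RealizedBy n P}

/-- `P` is `n`-fold: `n` is the smallest integer such that there is a sequence of
recursive partial-conjugates `P₁, …, P_n` with `P₁ = P`. -/
def IsNFold {X : Type*} (n : ℕ) (P : X → X → Prop) : Prop :=
  IsLeast {m | ∃ Ps : ℕ → X → X → Prop, RecPartialConjSeq m Ps ∧ Ps 1 = P} n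

/-!
If `P = L ∩ M` with `L` and `M` linear, then a pair on which `L` and `M` agree is comparable in `P`
and any other pair is comparable in `L ∩ Mᵈ`, so `L ∩ Mᵈ` is conjugate to `P`. Conversely, if `Q`
is conjugate to `P`, so is `Qᵈ`; the union of two conjugate partial orders is linear, hence
`P = (P ∪ Q) ∩ (P ∪ Qᵈ)` is an intersection of two linear orders.

`posetDim` is an infimum in `ℕ`, which would be `0` if `P` had no realizer. But the finitely many
linear extensions of `P` do realize it: if `¬P x y`, adjoining the pair `(y, x)` to `P` gives a
partial order, and Szpilrajn's theorem extends it to a linear order that separates `x` from `y`.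
-/

section ConjugateOrders

variable {X : Type*} {P Q L M N : X → X → Prop} {x y z : X}

theorem isPartialOrderRel_iff : IsPartialOrderRel P ↔ IsPartialOrder X P :=
  ⟨fun h ↦ { refl := h.1, antisymm := h.2.1, trans := h.2.2 },
    fun h ↦ ⟨h.refl, h.antisymm, h.trans⟩⟩

theorem isLinearOrderRel_iff : IsLinearOrderRel L ↔ IsLinearOrder X L :=
  ⟨fun h ↦
      { refl := fun x ↦ or_self_iff.mp (h.1 x x)
        antisymm := h.2.1
        trans := h.2.2
        total := h.1 },
    fun h ↦ ⟨h.total, h.antisymm, h.trans⟩⟩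

theorem IsLinearOrderRel.isPartialOrderRel (hL : IsLinearOrderRel L) : IsPartialOrderRel L :=
  isPartialOrderRel_iff.mpr (isLinearOrderRel_iff.mp hL).toIsPartialOrder

protected theorem IsPartialOrderRel.dualRel (hP : IsPartialOrderRel P) :
    IsPartialOrderRel (dualRel P) :=
  ⟨hP.1, fun x y hyx hxy ↦ hP.2.1 x y hxy hyx, fun x y z hyx hzy ↦ hP.2.2 z y x hzy hyx⟩

theorem IsPartialOrderRel.inf (hP : IsPartialOrderRel P) (hQ : IsPartialOrderRel Q) :
    IsPartialOrderRel (P ⊓ Q) :=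
  ⟨fun x ↦ ⟨hP.1 x, hQ.1 x⟩, fun x y hxy hyx ↦ hP.2.1 x y hxy.1 hyx.1,
    fun x y z hxy hyz ↦ ⟨hP.2.2 x y z hxy.1 hyz.1, hQ.2.2 x y z hxy.2 hyz.2⟩⟩

theorem compar_comm : Compar P x y ↔ Compar P y x :=
  or_comm

theorem compar_dualRel : Compar (dualRel P) x y ↔ Compar P x y :=
  or_comm

theorem conjugateRel_iff :
    ConjugateRel P Q ↔ ∀ x y, x ≠ y → (Compar P x y ↔ ¬Compar Q x y) :=
  forall₃_congr fun _ _ _ ↦ xor_iff_iff_not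

theorem IsPartialOrderRel.exists_isLinearOrderRel_le (hP : IsPartialOrderRel P) :
    ∃ L, IsLinearOrderRel L ∧ P ≤ L := by
  have := isPartialOrderRel_iff.mp hP
  obtain ⟨L, hL, hPL⟩ := extend_partialOrder P
  exact ⟨L, isLinearOrderRel_iff.mpr hL, hPL⟩

/-- The relation obtained from `P` by adjoining the pair `(u, v)`. When `P` is reflexive and
transitive this is the transitive closure of `P ∪ {(u, v)}`, written out explicitly: a new
comparability uses the pair `(u, v)` exactly once. -/
def adjoinPair (P : X → X → Prop) (u v : X) : X → X → Prop :=
  fun a b ↦ P a b ∨ P a u ∧ P v b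

protected theorem IsPartialOrderRel.adjoinPair {u v : X} (hP : IsPartialOrderRel P) (hvu : ¬P v u) :
    IsPartialOrderRel (adjoinPair P u v) := by
  obtain ⟨refl, antisymm, trans⟩ := hP
  refine ⟨fun a ↦ Or.inl (refl a), ?_, ?_⟩
  · rintro a b (hab | ⟨hau, hvb⟩) (hba | ⟨hbu, hva⟩)
    · exact antisymm a b hab hba
    · exact absurd (trans _ _ _ hva (trans _ _ _ hab hbu)) hvu
    · exact absurd (trans _ _ _ hvb (trans _ _ _ hba hau)) hvu
    · exact absurd (trans _ _ _ hvb hbu) hvu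
  · rintro a b c (hab | ⟨hau, hvb⟩) (hbc | ⟨hbu, hvc⟩)
    · exact Or.inl (trans _ _ _ hab hbc)
    · exact Or.inr ⟨trans _ _ _ hab hbu, hvc⟩
    · exact Or.inr ⟨hau, trans _ _ _ hvb hbc⟩
    · exact Or.inr ⟨hau, hvc⟩

theorem IsPartialOrderRel.exists_isLinearOrderRel_le_not (hP : IsPartialOrderRel P)
    (hxy : ¬P x y) : ∃ L, IsLinearOrderRel L ∧ P ≤ L ∧ ¬L x y := by
  obtain ⟨L, hL, hle⟩ := (hP.adjoinPair hxy).exists_isLinearOrderRel_le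
  refine ⟨L, hL, fun a b hab ↦ hle a b (Or.inl hab), fun hLxy ↦ hxy ?_⟩
  have hLyx : L y x := hle y x (Or.inr ⟨hP.1 y, hP.1 x⟩)
  exact hL.2.1 x y hLxy hLyx ▸ hP.1 x

theorem IsPartialOrderRel.exists_realizedBy [Finite X] (hP : IsPartialOrderRel P) :
    ∃ n, RealizedBy n P := by
  obtain ⟨n, ⟨e⟩⟩ := Finite.exists_equiv_fin {L // IsLinearOrderRel L ∧ P ≤ L}
  refine ⟨n, fun i ↦ (e.symm i).1, fun i ↦ (e.symm i).2.1, fun x y ↦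
    ⟨fun hxy i ↦ (e.symm i).2.2 x y hxy, fun hall ↦ ?_⟩⟩
  by_contra hxy
  obtain ⟨L, hL, hPL, hLxy⟩ := hP.exists_isLinearOrderRel_le_not hxy
  exact hLxy (by simpa only [e.symm_apply_apply] using hall (e ⟨L, hL, hPL⟩))

theorem RealizedBy.succ {n : ℕ} (hP : IsPartialOrderRel P) (h : RealizedBy n P) :
    RealizedBy (n + 1) P := by
  obtain ⟨L, hL, hLP⟩ := h
  obtain ⟨M, hM, hPM⟩ := hP.exists_isLinearOrderRel_le
  refine ⟨Fin.cons M L, Fin.forall_fin_succ.mpr ⟨hM, hL⟩, fun x y ↦ ?_⟩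
  simp only [Fin.forall_fin_succ, Fin.cons_zero, Fin.cons_succ, ← hLP]
  exact (and_iff_right_of_imp (hPM x y)).symm

theorem RealizedBy.mono {m n : ℕ} (hP : IsPartialOrderRel P) (hmn : m ≤ n)
    (h : RealizedBy m P) : RealizedBy n P :=
  Nat.le_induction h (fun _ _ ↦ RealizedBy.succ hP) n hmn

theorem IsPartialOrderRel.posetDim_le_iff [Finite X] {n : ℕ} (hP : IsPartialOrderRel P) :
    posetDim P ≤ n ↔ RealizedBy n P :=
  ⟨fun h ↦ RealizedBy.mono hP h (Nat.sInf_mem hP.exists_realizedBy), fun h ↦ Nat.sInf_le h⟩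

theorem realizedBy_two_iff :
    RealizedBy 2 P ↔ ∃ L M, IsLinearOrderRel L ∧ IsLinearOrderRel M ∧ P = L ⊓ M := by
  constructor
  · rintro ⟨L, hL, hLP⟩
    refine ⟨L 0, L 1, hL 0, hL 1, ?_⟩
    ext x y
    exact (hLP x y).trans Fin.forall_fin_two
  · rintro ⟨L, M, hL, hM, rfl⟩
    exact ⟨![L, M], Fin.forall_fin_two.mpr ⟨hL, hM⟩, fun x y ↦
      (Fin.forall_fin_two (p := fun i ↦ ![L, M] i x y)).symm⟩

namespace ConjugateRel

theorem symm (h : ConjugateRel P Q) : ConjugateRel Q P :=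
  fun x y hne ↦ Or.symm (h x y hne)

theorem dualRel_right (h : ConjugateRel P Q) : ConjugateRel P (dualRel Q) :=
  conjugateRel_iff.mpr fun x y hne ↦ by
    rw [compar_dualRel]
    exact conjugateRel_iff.mp h x y hne

theorem eq_of_compar (h : ConjugateRel P Q) (hPxy : Compar P x y) (hQxy : Compar Q x y) :
    x = y := by
  by_contra hne
  exact (conjugateRel_iff.mp h x y hne).mp hPxy hQxy

theorem compar_or_compar (h : ConjugateRel P Q) (hne : x ≠ y) : Compar P x y ∨ Compar Q x y :=
  or_iff_not_imp_right.mpr (conjugateRel_iff.mp h x y hne).mpr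

theorem relUnion_total (h : ConjugateRel P Q) (hP : IsPartialOrderRel P) (x y : X) :
    relUnion P Q x y ∨ relUnion P Q y x := by
  obtain rfl | hne := eq_or_ne x y
  · exact Or.inl (Or.inl (hP.1 x))
  · exact (h.compar_or_compar hne).elim (Or.imp Or.inl Or.inl) (Or.imp Or.inr Or.inr)

theorem relUnion_antisymm (h : ConjugateRel P Q) (hP : IsPartialOrderRel P)
    (hQ : IsPartialOrderRel Q) (hxy : relUnion P Q x y) (hyx : relUnion P Q y x) : x = y := by
  rcases hxy with hPxy | hQxy <;> rcases hyx with hPyx | hQyx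
  · exact hP.2.1 x y hPxy hPyx
  · exact h.eq_of_compar (Or.inl hPxy) (Or.inr hQyx)
  · exact h.eq_of_compar (Or.inr hPyx) (Or.inl hQxy)
  · exact hQ.2.1 x y hQxy hQyx

-- If instead `z` were below `x` in `P` or in `Q`, transitivity there would make one of the pairs
-- `(y, z)`, `(x, y)` comparable in both orders.
theorem relUnion_of_left_of_right (h : ConjugateRel P Q) (hP : IsPartialOrderRel P)
    (hQ : IsPartialOrderRel Q) (hxy : P x y) (hyz : Q y z) : relUnion P Q x z := by
  rcases h.relUnion_total hP x z with hxz | hPzx | hQzx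
  · exact hxz
  · have hPzy : P z y := hP.2.2 z x y hPzx hxy
    obtain rfl : y = z := h.eq_of_compar (Or.inr hPzy) (Or.inl hyz)
    exact Or.inl hxy
  · have hQyx : Q y x := hQ.2.2 y z x hyz hQzx
    obtain rfl : x = y := h.eq_of_compar (Or.inl hxy) (Or.inr hQyx)
    exact Or.inr hyz

theorem relUnion_trans (h : ConjugateRel P Q) (hP : IsPartialOrderRel P)
    (hQ : IsPartialOrderRel Q) (hxy : relUnion P Q x y) (hyz : relUnion P Q y z) :
    relUnion P Q x z := by
  rcases hxy with hPxy | hQxy <;> rcases hyz with hPyz | hQyz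
  · exact Or.inl (hP.2.2 x y z hPxy hPyz)
  · exact h.relUnion_of_left_of_right hP hQ hPxy hQyz
  · exact (h.symm.relUnion_of_left_of_right hQ hP hQxy hPyz).symm
  · exact Or.inr (hQ.2.2 x y z hQxy hQyz)

theorem isLinearOrderRel_relUnion (h : ConjugateRel P Q) (hP : IsPartialOrderRel P)
    (hQ : IsPartialOrderRel Q) : IsLinearOrderRel (relUnion P Q) :=
  ⟨h.relUnion_total hP, fun _ _ ↦ h.relUnion_antisymm hP hQ, fun _ _ _ ↦ h.relUnion_trans hP hQ⟩

end ConjugateRel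

theorem relUnion_inf_relUnion_dualRel (hP : IsPartialOrderRel P) (hQ : IsPartialOrderRel Q) :
    relUnion P Q ⊓ relUnion P (dualRel Q) = P := by
  ext x y
  refine or_and_left.symm.trans (or_iff_left_of_imp ?_)
  rintro ⟨hxy, hyx⟩
  exact hQ.2.1 x y hxy hyx ▸ hP.1 x

theorem IsPartialOrderRel.compar_inf_iff (hL : IsPartialOrderRel L) (hne : x ≠ y) (hxy : L x y) :
    Compar (L ⊓ N) x y ↔ N x y := by
  have hyx : ¬L y x := fun hyx ↦ hne (hL.2.1 x y hxy hyx)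
  exact (or_iff_left fun h ↦ hyx h.1).trans (and_iff_right hxy)

theorem IsLinearOrderRel.iff_not_swap (hM : IsLinearOrderRel M) (hne : x ≠ y) :
    M x y ↔ ¬M y x :=
  ⟨fun hxy hyx ↦ hne (hM.2.1 x y hxy hyx), (hM.1 x y).resolve_right⟩

theorem IsLinearOrderRel.conjugateRel_inf_dualRel (hL : IsLinearOrderRel L)
    (hM : IsLinearOrderRel M) : ConjugateRel (L ⊓ M) (L ⊓ dualRel M) := by
  refine conjugateRel_iff.mpr fun x y hne ↦ ?_
  wlog hxy : L x y generalizing x y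
  · rw [compar_comm, compar_comm (P := L ⊓ dualRel M)]
    exact this y x hne.symm ((hL.1 x y).resolve_left hxy)
  have hL' := hL.isPartialOrderRel
  rw [hL'.compar_inf_iff hne hxy, hL'.compar_inf_iff hne hxy]
  exact hM.iff_not_swap hne

theorem IsPartialOrderRel.realizedBy_two_iff_exists_conjugateRel (hP : IsPartialOrderRel P) :
    RealizedBy 2 P ↔ ∃ Q, IsPartialOrderRel Q ∧ ConjugateRel P Q := by
  rw [realizedBy_two_iff]
  constructor
  · rintro ⟨L, M, hL, hM, rfl⟩
    exact ⟨L ⊓ dualRel M, hL.isPartialOrderRel.inf hM.isPartialOrderRel.dualRel,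
      hL.conjugateRel_inf_dualRel hM⟩
  · rintro ⟨Q, hQ, hPQ⟩
    exact ⟨relUnion P Q, relUnion P (dualRel Q), hPQ.isLinearOrderRel_relUnion hP hQ,
      hPQ.dualRel_right.isLinearOrderRel_relUnion hP hQ.dualRel,
      (relUnion_inf_relUnion_dualRel hP hQ).symm⟩

end ConjugateOrders

theorem stmt4 {X : Type*} [Fintype X] [Nonempty X]
    (P : X → X → Prop) (hP : IsPartialOrderRel P) :
    posetDim P ≤ 2 ↔ ∃ Q : X → X → Prop, IsPartialOrderRel Q ∧ ConjugateRel P Q :=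
  hP.posetDim_le_iff.trans hP.realizedBy_two_iff_exists_conjugateRel
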